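/- (Sharpness of the singular Moser–Trudinger inequality in the product space.) Let n ≥ 2 be an integer, Ω ⊂ ℝ^n a bounded open set with 0 ∈ Ω, λ ∈ [0, n), and β > 0 a real number with (2^{(n−2)/(n−1)} β)/α_n + λ/n > 1. Then for every C > 0 there exist u, v ∈ C_c^∞(Ω) with ∫_Ω |∇u|^n dx + ∫_Ω |∇v|^n dx ≤ 1 and ∫_Ω exp(β (|u(x)|^{n/(n−1)} + |v(x)|^{n/(n−1)})) / |x|^λ dx > C; that is, the supremum over the unit ball is infinite. -/

import Mathlib

/-!
The classical Moser functions, smoothed and used twice, witness the sharpness. Fix a closed ball of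
radius `R` about the origin inside `Ω` and put `u = v = c φ_L(log (R / |x|))`, where `φ_L` is a
smooth truncation of the identity at height about `L` (`exists_smooth_truncation`,
`exists_smooth_moser`). Since `|∇u| ≤ c / |x|` on the annulus `R e^{-L} ≤ |x| ≤ R` and `∇u = 0`
elsewhere, polar coordinates give `∫ |∇u|^n ≤ c^n ω_{n-1} L` (`energy_le`), so the choice
`c^n = 1 / (2 ω_{n-1} L)` puts `(u, v)` in the unit ball.

On the ball of radius `R e^{-L}` one has `u ≥ c (L - 2)`, and Bernoulli's inequality
(`exponent_ge`) bounds the exponent from below by `K L - O(1)` with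
`K = n · 2^{(n-2)/(n-1)} β / α_n`. As `|x|^{-λ} ≥ (R e^{-L})^{-λ}` there and the volume of the ball
is a multiple of `e^{-nL}`, the integral is at least a positive constant times
`e^{L (K - n + λ)}`, which is unbounded because the hypothesis says exactly `K - n + λ > 0`.
-/

open MeasureTheory Real

noncomputable section

/-- `ω_{n-1}`, the surface area of the unit sphere `S^{n-1} ⊂ ℝⁿ`. -/
def sphereArea (n : ℕ) : ℝ := 2 * Real.pi ^ ((n : ℝ) / 2) / Real.Gamma ((n : ℝ) / 2)

/-- The Moser constant `α_n = n ω_{n-1}^{1/(n-1)}`. -/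
def moserConst (n : ℕ) : ℝ := (n : ℝ) * sphereArea n ^ (1 / ((n : ℝ) - 1))

/-- `u ∈ C_c^∞(Ω)`: `u` is smooth with compact support contained in `Ω`. -/
def IsCcSmooth {n : ℕ} (Ω : Set (EuclideanSpace ℝ (Fin n)))
    (u : EuclideanSpace ℝ (Fin n) → ℝ) : Prop :=
  ContDiff ℝ (⊤ : ℕ∞) u ∧ HasCompactSupport u ∧ tsupport u ⊆ Ω

/-- Polar coordinates relate the two normalising constants: `ω_{n-1} = n |B_1|`. -/
lemma card_mul_volume_unitBall (n : ℕ) (hn : 2 ≤ n) :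
    (n : ℝ) * (volume : Measure (EuclideanSpace ℝ (Fin n))).real (Metric.ball 0 1) = sphereArea n := by
  have : Nonempty (Fin n) := ⟨⟨0, by omega⟩⟩
  have hn' : (0:ℝ) < n := by exact_mod_cast (by omega : 0 < n)
  have hG := Real.Gamma_pos_of_pos (half_pos hn')
  rw [sphereArea, Measure.real, EuclideanSpace.volume_ball]
  simp only [ENNReal.ofReal_one, one_pow, one_mul, Fintype.card_fin]
  rw [ENNReal.toReal_ofReal (by rw [Real.Gamma_add_one (by positivity)]; positivity), Real.Gamma_add_one (by positivity),
    Real.sqrt_eq_rpow, ← Real.rpow_natCast, ← Real.rpow_mul Real.pi_pos.le]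
  rw [show (1:ℝ)/2 * n = n/2 by ring]
  field_simp

/-- A smooth replacement for `t ↦ min (max t 0) L`: same support and plateau structure, slope at
most `1`, and a plateau at height at least `L - 2`. It is the primitive of a smooth bump equal to `1`
on `[1, L - 1]` and vanishing off `[0, L]`. -/
lemma exists_smooth_truncation (L : ℝ) (hL : 2 ≤ L) : ∃ φ : ℝ → ℝ, ContDiff ℝ (⊤ : ℕ∞) φ ∧ (∀ t, |deriv φ t| ≤ 1) ∧
    (∀ t ≤ 0, φ t = 0) ∧ (∀ t, L ≤ t → φ t = φ L) ∧ L - 2 ≤ φ L := by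
  set h : ℝ → ℝ := fun s => smoothTransition s * smoothTransition (L - s) with hh
  have hsm : ContDiff ℝ (⊤ : ℕ∞) h :=
    smoothTransition.contDiff.mul (smoothTransition.contDiff.comp (contDiff_const.sub contDiff_id))
  have hc : Continuous h := hsm.continuous
  have h0 : ∀ s, 0 ≤ h s := fun s => mul_nonneg (smoothTransition.nonneg _) (smoothTransition.nonneg _)
  have h1 : ∀ s, h s ≤ 1 := fun s =>
    mul_le_one₀ (smoothTransition.le_one _) (smoothTransition.nonneg _) (smoothTransition.le_one _)
  have hd : ∀ t, HasDerivAt (fun t => ∫ s in (0:ℝ)..t, h s) (h t) t := fun t =>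
    hc.integral_hasStrictDerivAt 0 t |>.hasDerivAt
  have hd' : deriv (fun t => ∫ s in (0:ℝ)..t, h s) = h := funext fun t => (hd t).deriv
  refine ⟨fun t => ∫ s in (0:ℝ)..t, h s, ?_, ?_, ?_, ?_, ?_⟩
  · rw [contDiff_infty_iff_deriv, hd']
    exact ⟨fun t => (hd t).differentiableAt, hsm⟩
  · intro t
    rw [hd', abs_of_nonneg (h0 t)]
    exact h1 t
  · intro t ht
    have : Set.EqOn h (fun _ => 0) (Set.uIcc 0 t) := by
      intro s hs
      rw [Set.uIcc_of_ge ht] at hs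
      simp [hh, smoothTransition.zero_of_nonpos hs.2]
    simpa using intervalIntegral.integral_congr (μ := volume) this
  · intro t ht
    have : Set.EqOn h (fun _ => 0) (Set.uIcc L t) := by
      intro s hs
      rw [Set.uIcc_of_le ht] at hs
      simp [hh, smoothTransition.zero_of_nonpos (sub_nonpos.2 hs.1)]
    have h2 : ∫ s in L..t, h s = 0 := by simpa using intervalIntegral.integral_congr (μ := volume) this
    have h3 := intervalIntegral.integral_add_adjacent_intervals (hc.intervalIntegrable (μ := volume) 0 L) (hc.intervalIntegrable L t)
    simp only
    linarith
  · have : Set.EqOn h (fun _ => 1) (Set.uIcc 1 (L-1)) := by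
      intro s hs
      rw [Set.uIcc_of_le (by linarith)] at hs
      simp [hh, smoothTransition.one_of_one_le hs.1, smoothTransition.one_of_one_le (by linarith [hs.2] : 1 ≤ L - s)]
    have h2 : ∫ s in (1:ℝ)..(L-1), h s = L - 2 := by
      rw [intervalIntegral.integral_congr (μ := volume) this]; simp; ring
    simp only
    rw [← h2]
    exact intervalIntegral.integral_mono_interval (by norm_num) (by linarith) (by linarith)
      (Filter.Eventually.of_forall h0) (hc.intervalIntegrable _ _)

/-- A smooth Moser function: `c φ(log (R / |x|))` with `φ` the smooth truncation at height `L`.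
It is a constant, at least `c (L - 2)`, on the ball of radius `R e^{-L}`, it vanishes off the ball
of radius `R`, and its gradient is supported in between, with norm at most `c / |x|`. Only the lower
bound of the constant is recorded. -/
lemma exists_smooth_moser (n : ℕ) (L R c : ℝ) (hL : 2 ≤ L) (hR : 0 < R) (hc : 0 ≤ c) :
    ∃ u : EuclideanSpace ℝ (Fin n) → ℝ, ContDiff ℝ (⊤ : ℕ∞) u ∧ (∀ x, R ≤ ‖x‖ → u x = 0) ∧
      (∀ x, ‖x‖ < R * exp (-L) → c * (L - 2) ≤ u x) ∧
      ∀ x, ‖gradient u x‖ ≤ (Set.Icc (R * exp (-L)) R).indicator (fun y => c / y) ‖x‖ := by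
  obtain ⟨φ, hφ, hd, hz, hk, hΦ⟩ := exists_smooth_truncation L hL
  set r := R * exp (-L) with hr
  have hr0 : 0 < r := by positivity
  have hrR : r < R := by
    rw [hr]; have : exp (-L) < 1 := Real.exp_lt_one_iff.2 (by linarith)
    nlinarith
  -- The explicit value near the origin avoids the junk value `log 0 = 0`.
  set u : EuclideanSpace ℝ (Fin n) → ℝ := fun x => if ‖x‖ < r then c * φ L else c * φ (log R - log ‖x‖) with hu
  have hlogr : log r = log R - L := by rw [hr, log_mul hR.ne' (exp_pos _).ne', log_exp]; ring
  have hu1 : ∀ x, x ≠ 0 → u x = c * φ (log R - log ‖x‖) := by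
    intro x hx
    simp only [hu]
    split_ifs with h
    · rw [hk (log R - log ‖x‖)]
      have := log_lt_log (norm_pos_iff.2 hx) h
      linarith
    · rfl
  have hu2 : ∀ x, ‖x‖ < r → u x = c * φ L := fun x hx => by simp [hu, hx]
  have hu3 : ∀ x, R ≤ ‖x‖ → u x = 0 := fun x hx => by
    have := log_le_log hR hx
    rw [hu1 x (norm_pos_iff.1 (hR.trans_le hx)), hz _ (by linarith), mul_zero]
  have hev : ∀ x, x ≠ 0 → u =ᶠ[nhds x] fun x => c * φ (log R - log ‖x‖) := fun x hx => by
    filter_upwards [isOpen_ne.mem_nhds hx] with y hy using hu1 y hy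
  have hev2 : ∀ x, ‖x‖ < r → u =ᶠ[nhds x] fun _ => c * φ L := fun x hx => by
    filter_upwards [(isOpen_lt continuous_norm continuous_const).mem_nhds hx] with y hy using hu2 y hy
  have hev3 : ∀ x, R < ‖x‖ → u =ᶠ[nhds x] fun _ => 0 := fun x hx => by
    filter_upwards [(isOpen_lt continuous_const continuous_norm).mem_nhds hx] with y hy using hu3 y (le_of_lt hy)
  have hgrad : ∀ x, ‖gradient u x‖ = ‖fderiv ℝ u x‖ := fun x => by simp [gradient]
  refine ⟨u, ?_, hu3, ?_, ?_⟩
  · rw [contDiff_iff_contDiffAt]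
    intro x
    by_cases hx : x = 0
    · subst hx
      exact contDiffAt_const.congr_of_eventuallyEq (hev2 0 (by simpa))
    · refine ContDiffAt.congr_of_eventuallyEq ?_ (hev x hx)
      exact contDiffAt_const.mul (hφ.contDiffAt.comp x (contDiffAt_const.sub
        ((contDiffAt_norm ℝ hx).log (norm_ne_zero_iff.2 hx))))
  · intro x hx
    rw [hu2 x hx]
    gcongr
  · intro x
    rw [hgrad]
    by_cases h1 : ‖x‖ < r
    · rw [(hev2 x h1).fderiv_eq]
      simp [Set.indicator, h1.not_ge]
    by_cases h2 : R < ‖x‖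
    · rw [(hev3 x h2).fderiv_eq]
      simp [Set.indicator, h2.not_ge]
    push Not at h1 h2
    have hx0 : 0 < ‖x‖ := hr0.trans_le h1
    have hx : x ≠ 0 := norm_pos_iff.1 hx0
    rw [Set.indicator_of_mem (Set.mem_Icc.2 ⟨h1, h2⟩), (hev x hx).fderiv_eq]
    have hnd : HasFDerivAt (fun x : EuclideanSpace ℝ (Fin n) => ‖x‖) (fderiv ℝ (fun x => ‖x‖) x) x :=
      ((contDiffAt_norm ℝ hx (n := 1)).differentiableAt (by norm_num)).hasFDerivAt
    have hnl : ‖fderiv ℝ (fun x : EuclideanSpace ℝ (Fin n) => ‖x‖) x‖ ≤ 1 := by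
      simpa using norm_fderiv_le_of_lipschitz ℝ (x₀ := x) (lipschitzWith_one_norm (E := EuclideanSpace ℝ (Fin n)))
    have hφd : HasDerivAt φ (deriv φ (log R - log ‖x‖)) (log R - log ‖x‖) :=
      (hφ.differentiable (by simp) _).hasDerivAt
    have h1d : HasDerivAt (fun y => c * φ (log R - log y))
        (c * (deriv φ (log R - log ‖x‖) * (-‖x‖⁻¹))) ‖x‖ :=
      (hφd.comp ‖x‖ ((hasDerivAt_log hx0.ne').const_sub (log R))).const_mul c
    have := h1d.comp_hasFDerivAt x hnd
    have h3 := this.fderiv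
    simp only [Function.comp_def] at h3
    rw [h3, norm_smul, norm_mul, norm_mul, norm_neg, norm_inv, norm_norm, norm_eq_abs, norm_eq_abs, abs_of_nonneg hc]
    calc _ ≤ c * (1 * ‖x‖⁻¹) * 1 := by gcongr; exact hd _
      _ = c / ‖x‖ := by rw [one_mul, mul_one, div_eq_mul_inv]

/-- The gradient bound `c / |x|` on the annulus `R e^{-L} ≤ |x| ≤ R` gives energy at most
`n |B_1| c^n ∫ dρ / ρ = n |B_1| c^n L`. -/
lemma energy_le (n : ℕ) (hn : 2 ≤ n) (L R c : ℝ) (hL : 0 ≤ L) (hR : 0 < R)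
    (Ω : Set (EuclideanSpace ℝ (Fin n)))
    (u : EuclideanSpace ℝ (Fin n) → ℝ)
    (hu : ∀ x, ‖gradient u x‖ ≤ (Set.Icc (R * exp (-L)) R).indicator (fun y => c / y) ‖x‖) :
    ∫ x in Ω, ‖gradient u x‖ ^ (n : ℝ) ≤
      (n * (volume : Measure (EuclideanSpace ℝ (Fin n))).real (Metric.ball 0 1)) * (c ^ n * L) := by
  set r := R * exp (-L) with hr
  have hr0 : 0 < r := by positivity
  have hrR : r ≤ R := by
    rw [hr]; have : exp (-L) ≤ 1 := exp_le_one_iff.2 (by linarith)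
    nlinarith
  have : Nonempty (Fin n) := ⟨⟨0, by omega⟩⟩
  set f : ℝ → ℝ := (Set.Icc r R).indicator (fun y => (c / y) ^ n) with hf
  have hle : ∀ x, ‖gradient u x‖ ^ (n : ℝ) ≤ f ‖x‖ := by
    intro x
    rw [rpow_natCast]
    refine (pow_le_pow_left₀ (norm_nonneg _) (hu x) n).trans ?_
    simp only [hf, Set.indicator]
    split_ifs
    · exact le_rfl
    · rw [zero_pow (by omega)]
  have hkey : ∀ y : ℝ, y ^ (n-1) • f y = (Set.Icc r R).indicator (fun y => c ^ n * (1 / y)) y := by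
    intro y
    simp only [hf, Set.indicator]
    split_ifs with h
    · have hy : 0 < y := hr0.trans_le h.1
      obtain ⟨m, rfl⟩ : ∃ m, n = m + 1 := ⟨n - 1, by omega⟩
      simp only [Nat.add_sub_cancel, smul_eq_mul, div_pow]
      field_simp
      ring
    · simp
  have hcont : ContinuousOn (fun y => c ^ n * (1 / y)) (Set.Icc r R) := by
    refine continuousOn_const.mul (continuousOn_const.div continuousOn_id ?_)
    intro y hy; exact (hr0.trans_le hy.1).ne'
  have hdim : Module.finrank ℝ (EuclideanSpace ℝ (Fin n)) = n := by simp
  have : Nontrivial (EuclideanSpace ℝ (Fin n)) := Module.nontrivial_of_finrank_pos (R := ℝ) (by rw [hdim]; omega)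
  have hint : Integrable (fun x : EuclideanSpace ℝ (Fin n) => f ‖x‖) := by
    rw [integrable_fun_norm_addHaar, hdim]
    simp only [hkey]
    refine Integrable.integrableOn ?_
    rw [integrable_indicator_iff measurableSet_Icc]
    exact hcont.integrableOn_Icc
  have hnn : ∀ x : EuclideanSpace ℝ (Fin n), 0 ≤ f ‖x‖ := fun x =>
    (rpow_nonneg (norm_nonneg _) _).trans (hle x)
  calc ∫ x in Ω, ‖gradient u x‖ ^ (n : ℝ) ≤ ∫ x in Ω, f ‖x‖ :=
        integral_mono_of_nonneg (Filter.Eventually.of_forall fun x => rpow_nonneg (norm_nonneg _) _)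
          hint.integrableOn (Filter.Eventually.of_forall hle)
    _ ≤ ∫ x, f ‖x‖ := setIntegral_le_integral hint (Filter.Eventually.of_forall hnn)
    _ = _ := by
      rw [integral_fun_norm_addHaar, hdim]
      simp only [hkey]
      have hsub : Set.Icc r R ⊆ Set.Ioi 0 := fun y hy => hr0.trans_le hy.1
      rw [setIntegral_indicator measurableSet_Icc, Set.inter_eq_right.2 hsub, integral_Icc_eq_integral_Ioc,
        ← intervalIntegral.integral_of_le hrR, intervalIntegral.integral_const_mul,
        integral_one_div_of_pos hr0 hR, show R / r = exp L by rw [hr, exp_neg]; field_simp, log_exp]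
      simp [mul_assoc]

/-- With `c^n = 1 / (2 ω L)`, the exponent of two equal Moser functions of height `c (L - 2)` is
at least linear in `L` up to a bounded loss, by Bernoulli's inequality. -/
lemma exponent_ge (n : ℕ) (hn : 2 ≤ n) (ω L β : ℝ) (hω : 0 < ω) (hL : 2 ≤ L) (hβ : 0 ≤ β) :
    (2 : ℝ) ^ (((n : ℝ) - 2) / ((n : ℝ) - 1)) * β * ω ^ (-(1 / ((n : ℝ) - 1))) *
        (L - 2 * ((n : ℝ) / ((n : ℝ) - 1))) ≤
      β * (2 * ((2 * ω * L) ^ (-(1 / (n : ℝ))) * (L - 2)) ^ ((n : ℝ) / ((n : ℝ) - 1))) := by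
  have hn2 : (2 : ℝ) ≤ n := by exact_mod_cast hn
  have hd : (0 : ℝ) < n - 1 := by linarith
  have hL0 : 0 < L := by linarith
  set q : ℝ := 1 / ((n : ℝ) - 1) with hq
  have hp : (n : ℝ) / (n - 1) = 1 + q := by rw [hq]; field_simp; ring
  have hq0 : 0 < q := by positivity
  have h2 : ((n : ℝ) - 2) / (n - 1) = 1 + -q := by rw [hq]; field_simp; ring
  have hexp : -(1 / (n : ℝ)) * (1 + q) = -q := by rw [hq]; field_simp; ring
  rw [hp, h2, mul_rpow (by positivity) (by linarith), ← rpow_mul (by positivity), hexp,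
    mul_rpow (by positivity) hL0.le, mul_rpow (by norm_num) hω.le,
    rpow_add (by norm_num : (0 : ℝ) < 2), rpow_one]
  have hB : L ^ q * (L - 2 * (1 + q)) ≤ (L - 2) ^ (1 + q) := by
    have h1 : -1 ≤ -(2 / L) := by
      rw [neg_le_neg_iff, div_le_one hL0]; exact hL
    have h3 := one_add_mul_self_le_rpow_one_add h1 (p := 1 + q) (by linarith)
    have h4 : L - 2 = L * (1 + -(2 / L)) := by field_simp; ring
    rw [h4, mul_rpow hL0.le (by linarith)]
    calc L ^ q * (L - 2 * (1 + q)) = L ^ (1 + q) * (1 + (1 + q) * -(2 / L)) := by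
          rw [rpow_add hL0, rpow_one]; field_simp; ring
      _ ≤ _ := by gcongr
  have hLq : L ^ (-q) * L ^ q = 1 := by rw [← rpow_add hL0]; simp
  calc 2 * 2 ^ (-q) * β * ω ^ (-q) * (L - 2 * (1 + q))
      = β * (2 * (2 ^ (-q) * ω ^ (-q) * L ^ (-q) * (L ^ q * (L - 2 * (1 + q))))) := by
        linear_combination (-(2 * 2 ^ (-q) * β * ω ^ (-q) * (L - 2 * (1 + q)))) * hLq
    _ ≤ _ := by gcongr

/-- Sharpness of the singular Moser–Trudinger inequality in the product space. -/
theorem product_singular_moser_trudinger_sharp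
    (n : ℕ) (hn : 2 ≤ n)
    (Ω : Set (EuclideanSpace ℝ (Fin n))) (hΩo : IsOpen Ω) (hΩb : Bornology.IsBounded Ω)
    (h0 : (0 : EuclideanSpace ℝ (Fin n)) ∈ Ω)
    (lam : ℝ) (hlam0 : 0 ≤ lam) (hlamn : lam < n)
    (β : ℝ) (hβ0 : 0 < β)
    (hβ : 1 < (2 : ℝ) ^ (((n : ℝ) - 2) / ((n : ℝ) - 1)) * β / moserConst n + lam / n) :
    ∀ C : ℝ, 0 < C → ∃ u v : EuclideanSpace ℝ (Fin n) → ℝ,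
      IsCcSmooth Ω u ∧ IsCcSmooth Ω v ∧
      (∫ x in Ω, ‖gradient u x‖ ^ (n : ℝ)) + (∫ x in Ω, ‖gradient v x‖ ^ (n : ℝ)) ≤ 1 ∧
      ENNReal.ofReal C < (∫⁻ x in Ω, ENNReal.ofReal
          (Real.exp (β * (|u x| ^ ((n : ℝ) / ((n : ℝ) - 1)) +
            |v x| ^ ((n : ℝ) / ((n : ℝ) - 1)))) / ‖x‖ ^ lam)) := by
  intro C hC
  obtain ⟨R, hR, hRΩ⟩ := Metric.nhds_basis_closedBall.mem_iff.1 (hΩo.mem_nhds h0)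
  have hn2 : (2 : ℝ) ≤ n := by exact_mod_cast hn
  have hdim : Module.finrank ℝ (EuclideanSpace ℝ (Fin n)) = n := by simp
  have : Nontrivial (EuclideanSpace ℝ (Fin n)) :=
    Module.nontrivial_of_finrank_pos (R := ℝ) (by rw [hdim]; omega)
  set V := (volume : Measure (EuclideanSpace ℝ (Fin n))).real (Metric.ball 0 1) with hV
  have hV0 : 0 < V := ENNReal.toReal_pos (Metric.measure_ball_pos _ _ one_pos).ne' measure_ball_lt_top.ne
  set ω := sphereArea n with hω
  have hωV : n * V = ω := card_mul_volume_unitBall n hn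
  have hω0 : 0 < ω := by rw [← hωV]; positivity
  set p := (n : ℝ) / ((n : ℝ) - 1) with hp
  have hd : (0 : ℝ) < n - 1 := by linarith
  have hp0 : 0 < p := by positivity
  set K := (2 : ℝ) ^ (((n : ℝ) - 2) / ((n : ℝ) - 1)) * β * ω ^ (-(1 / ((n : ℝ) - 1))) with hK
  have hKn : n - lam < K := by
    have h1 : (2 : ℝ) ^ (((n : ℝ) - 2) / ((n : ℝ) - 1)) * β / moserConst n = K / n := by
      rw [moserConst, ← hω, hK, rpow_neg hω0.le]
      field_simp
    rw [h1, ← add_div, one_lt_div (by linarith)] at hβ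
    linarith
  -- `A e^{L (K - (n - lam))}` is the lower bound obtained from the ball of radius `R e^{-L}`.
  set A := V * R ^ ((n : ℝ) - lam) * exp (-(K * (2 * p))) with hA
  have hA0 : 0 < A := by positivity
  have hlim : Filter.Tendsto (fun L : ℝ => A * exp (L * (K - (n - lam)))) Filter.atTop Filter.atTop :=
    (tendsto_exp_atTop.comp (Filter.tendsto_id.atTop_mul_const (by linarith))).const_mul_atTop hA0
  obtain ⟨L, hLC, hL⟩ := ((hlim.eventually_gt_atTop C).and (Filter.eventually_ge_atTop 2)).exists
  have hL0 : 0 < L := by linarith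
  set c := (2 * ω * L) ^ (-(1 / (n : ℝ))) with hc
  have hc0 : 0 < c := by positivity
  have hcn : ω * (c ^ n * L) = 1 / 2 := by
    rw [hc, ← rpow_natCast, ← rpow_mul (by positivity),
      show -(1 / (n : ℝ)) * n = -1 by field_simp, rpow_neg_one]
    field_simp
  obtain ⟨u, hus, huR, hur, hug⟩ := exists_smooth_moser n L R c hL hR hc0.le
  have hE := energy_le n hn L R c hL0.le hR Ω u hug
  rw [← hV, hωV, hcn] at hE
  have hts : tsupport u ⊆ Metric.closedBall 0 R := by
    refine closure_minimal (fun x hx => ?_) Metric.isClosed_closedBall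
    rw [mem_closedBall_zero_iff]
    by_contra h
    exact hx (huR x (not_le.1 h).le)
  have hcc : IsCcSmooth Ω u :=
    ⟨hus, (isCompact_closedBall 0 R).of_isClosed_subset (isClosed_tsupport u) hts, hts.trans hRΩ⟩
  refine ⟨u, u, hcc, hcc, by linarith, ?_⟩
  set r := R * exp (-L) with hr
  have hr0 : 0 < r := by positivity
  have hrR : r ≤ R := by
    have : exp (-L) ≤ 1 := exp_le_one_iff.2 (by linarith)
    rw [hr]; nlinarith
  have hpt : ∀ x : EuclideanSpace ℝ (Fin n), x ∈ Metric.ball 0 r → x ≠ 0 →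
      exp (K * (L - 2 * p)) / r ^ lam ≤ exp (β * (|u x| ^ p + |u x| ^ p)) / ‖x‖ ^ lam := by
    intro x hx hx0
    rw [mem_ball_zero_iff] at hx
    have hxn := norm_pos_iff.2 hx0
    have h1 : c * (L - 2) ≤ |u x| := (hur x hx).trans (le_abs_self _)
    have h2 : (c * (L - 2)) ^ p ≤ |u x| ^ p :=
      rpow_le_rpow (mul_nonneg hc0.le (by linarith)) h1 hp0.le
    have h3 : K * (L - 2 * p) ≤ β * (|u x| ^ p + |u x| ^ p) := by
      refine (exponent_ge n hn ω L β hω0 hL hβ0.le).trans ?_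
      gcongr
      linarith
    gcongr
  have hvol : volume (Metric.ball (0 : EuclideanSpace ℝ (Fin n)) r \ {0}) =
      ENNReal.ofReal (r ^ n * V) := by
    rw [measure_sdiff_null (measure_singleton _), Measure.addHaar_ball _ _ hr0.le, hdim,
      ENNReal.ofReal_mul (by positivity), hV, Measure.real,
      ENNReal.ofReal_toReal measure_ball_lt_top.ne]
  have hval : exp (K * (L - 2 * p)) / r ^ lam * (r ^ n * V) = A * exp (L * (K - (n - lam))) := by
    have h1 : r ^ n / r ^ lam = R ^ ((n : ℝ) - lam) * exp (-L * (n - lam)) := by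
      rw [← rpow_natCast, ← rpow_sub hr0, hr, mul_rpow hR.le (exp_pos _).le, ← exp_mul]
    calc _ = exp (K * (L - 2 * p)) * (r ^ n / r ^ lam) * V := by ring
      _ = V * R ^ ((n : ℝ) - lam) * (exp (K * (L - 2 * p)) * exp (-L * (n - lam))) := by
        rw [h1]; ring
      _ = V * R ^ ((n : ℝ) - lam) * (exp (-(K * (2 * p))) * exp (L * (K - (n - lam)))) := by
        rw [← exp_add, ← exp_add]; ring_nf
      _ = _ := by rw [hA]; ring
  have hmeas : MeasurableSet (Metric.ball (0 : EuclideanSpace ℝ (Fin n)) r \ {0}) :=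
    Metric.isOpen_ball.measurableSet.diff (measurableSet_singleton 0)
  have hsub : Metric.ball (0 : EuclideanSpace ℝ (Fin n)) r \ {0} ⊆ Ω := fun x hx =>
    hRΩ (Metric.closedBall_subset_closedBall hrR (Metric.ball_subset_closedBall hx.1))
  calc ENNReal.ofReal C
      < ENNReal.ofReal (exp (K * (L - 2 * p)) / r ^ lam * (r ^ n * V)) := by
        rw [hval]; exact (ENNReal.ofReal_lt_ofReal_iff (hC.trans hLC)).2 hLC
    _ = ∫⁻ _ in Metric.ball (0 : EuclideanSpace ℝ (Fin n)) r \ {0},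
          ENNReal.ofReal (exp (K * (L - 2 * p)) / r ^ lam) := by
        rw [setLIntegral_const, hvol, ENNReal.ofReal_mul (by positivity)]
    _ ≤ ∫⁻ x in Metric.ball (0 : EuclideanSpace ℝ (Fin n)) r \ {0},
          ENNReal.ofReal (exp (β * (|u x| ^ p + |u x| ^ p)) / ‖x‖ ^ lam) :=
        setLIntegral_mono' hmeas fun x hx => ENNReal.ofReal_le_ofReal (hpt x hx.1 hx.2)
    _ ≤ _ := lintegral_mono_set hsub
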